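/- arXiv:2202.00586 — 3 statements merged into one kernel-verified Lean document; each statement's English description precedes it below -/
import Mathlib

section
/- For all s > 0 and c > 0, the large-n limit of E[h_{n/2}²(‖√s Z‖ c√n / s)], where Z ~ N(0, I_n), equals c²/((√s/2 + sqrt(s/4 + c²))²). -/
open MeasureTheory ProbabilityTheory Filter

/-- Modified Bessel function of the first kind of order `ν`. -/
noncomputable def besselI (ν x : ℝ) : ℝ :=
  ∑' k : ℕ, (x / 2) ^ (2 * (k : ℝ) + ν) / (k.factorial * Real.Gamma ((k : ℝ) + ν + 1))

/-- Ratio `h_ν(x) = I_ν(x) / I_{ν-1}(x)`. -/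
noncomputable def besselRatio (ν x : ℝ) : ℝ := besselI ν x / besselI (ν - 1) x

/-- Standard Gaussian measure on `ℝⁿ`. -/
noncomputable def stdGaussian (n : ℕ) : Measure (Fin n → ℝ) :=
  Measure.pi fun _ => gaussianReal 0 1

/-- Euclidean norm on `Fin n → ℝ`. -/
noncomputable def euclNorm {n : ℕ} (z : Fin n → ℝ) : ℝ := Real.sqrt (∑ i, z i ^ 2)

/-! Write `t_k` for the terms of the series of `I_ν(x)`. The shift relations between `t_k`, the
terms of `I_{ν+1}` and those of `I_{ν-1}` give `∑ k t_k = (x/2) I_{ν+1}` and `∑ k (k + ν) t_k =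
(x/2)² I_ν`. Nonnegativity of the variance of `k` under the weights `t_k` is then a quadratic
inequality for `h_{ν+1}`, that is, an upper bound of Amos type, and the three-term recurrence turns
it into the lower bound `x / (ν + √(ν² + x²)) ≤ h_ν(x)`. Both bounds are homogeneous in `(ν, x)` up
to a shift of `ν` by one, so `h_ν(x)` converges as soon as `ν → ∞` and `x / ν` converges. Realising
all the Gaussian vectors on one probability space as initial segments of an i.i.d. sequence, the law
of large numbers gives `‖Z‖ / √n → 1` almost surely, and `0 ≤ h ≤ 1` allows dominated convergence.
-/

open scoped Topology

section BesselSeries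

variable {ν x : ℝ}

/-- The `k`-th term of the power series defining `I_ν(x)`. -/
noncomputable def besselITerm (ν x : ℝ) (k : ℕ) : ℝ :=
  (x / 2) ^ (2 * (k : ℝ) + ν) / (k.factorial * Real.Gamma ((k : ℝ) + ν + 1))

lemma besselITerm_pos (hν : -1 < ν) (hx : 0 < x) (k : ℕ) : 0 < besselITerm ν x k := by
  have : 0 < Real.Gamma ((k : ℝ) + ν + 1) :=
    Real.Gamma_pos_of_pos (by linarith [k.cast_nonneg (α := ℝ)])
  unfold besselITerm
  positivity

-- Holds at the poles too: Mathlib's `Γ` vanishes there, so its inverse agrees with `1 / Γ = 0`.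
lemma div_Gamma_add_one (s : ℝ) : s / Real.Gamma (s + 1) = (Real.Gamma s)⁻¹ := by
  rcases eq_or_ne s 0 with rfl | hs
  · simp [Real.Gamma_zero]
  · rw [Real.Gamma_add_one hs, div_mul_cancel_left₀ hs]

lemma add_mul_besselITerm (hx : 0 < x) (k : ℕ) :
    (k + ν) * besselITerm ν x k = x / 2 * besselITerm (ν - 1) x k := by
  have hpow : (x / 2) ^ (2 * (k : ℝ) + ν) = x / 2 * (x / 2) ^ (2 * (k : ℝ) + (ν - 1)) := by
    rw [← add_sub_assoc, Real.rpow_sub_one (by positivity), mul_div_cancel₀ _ (by positivity)]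
  rw [besselITerm, besselITerm, hpow, show (k : ℝ) + (ν - 1) + 1 = k + ν by ring,
    div_mul_eq_div_div, div_mul_eq_div_div, div_eq_mul_inv _ (Real.Gamma (k + ν)),
    ← div_Gamma_add_one]
  ring

lemma succ_mul_besselITerm_succ (hx : 0 < x) (k : ℕ) :
    ((k + 1 : ℕ) : ℝ) * besselITerm ν x (k + 1) = x / 2 * besselITerm (ν + 1) x k := by
  have hpow : (x / 2) ^ (2 * ((k + 1 : ℕ) : ℝ) + ν) =
      x / 2 * (x / 2) ^ (2 * (k : ℝ) + (ν + 1)) := by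
    rw [show 2 * ((k + 1 : ℕ) : ℝ) + ν = 2 * k + (ν + 1) + 1 by push_cast; ring,
      Real.rpow_add_one (by positivity), mul_comm]
  rw [besselITerm, besselITerm, hpow, Nat.factorial_succ, Nat.cast_mul,
    show ((k + 1 : ℕ) : ℝ) + ν + 1 = k + (ν + 1) + 1 by push_cast; ring]
  field_simp

lemma eventually_one_le_Gamma_natCast_add (s : ℝ) :
    ∀ᶠ k : ℕ in atTop, 1 ≤ Real.Gamma (k + s) := by
  filter_upwards [(tendsto_natCast_atTop_atTop (R := ℝ)).eventually_ge_atTop (2 - s)] with k hk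
  rw [← Real.Gamma_two]
  exact Real.Gamma_strictMonoOn_Ici.monotoneOn Set.self_mem_Ici
    (Set.mem_Ici.2 (by linarith)) (by linarith)

lemma summable_besselITerm (hx : 0 < x) : Summable (besselITerm ν x) := by
  have hpow (k : ℕ) : (x / 2) ^ (2 * (k : ℝ) + ν) = (x / 2) ^ ν * ((x / 2) ^ 2) ^ k := by
    rw [add_comm, Real.rpow_add (by positivity), ← pow_mul, ← Real.rpow_natCast]
    push_cast
    rfl
  refine ((Real.summable_pow_div_factorial ((x / 2) ^ 2)).mul_left
    ((x / 2) ^ ν)).of_norm_bounded_eventually_nat ?_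
  filter_upwards [eventually_one_le_Gamma_natCast_add (ν + 1)] with k hk
  rw [← add_assoc] at hk
  rw [besselITerm, hpow, Real.norm_of_nonneg (by positivity), mul_div_assoc]
  gcongr
  exact le_mul_of_one_le_right (by positivity) hk

lemma hasSum_besselITerm (hx : 0 < x) : HasSum (besselITerm ν x) (besselI ν x) :=
  (summable_besselITerm hx).hasSum

lemma besselI_pos (hν : -1 < ν) (hx : 0 < x) : 0 < besselI ν x :=
  (summable_besselITerm hx).tsum_pos (fun k => (besselITerm_pos hν hx k).le) 0
    (besselITerm_pos hν hx 0)

lemma hasSum_natCast_mul_besselITerm (hx : 0 < x) :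
    HasSum (fun k : ℕ => k * besselITerm ν x k) (x / 2 * besselI (ν + 1) x) := by
  rw [← hasSum_nat_add_iff' 1]
  simpa only [succ_mul_besselITerm_succ hx, Finset.sum_range_one, Nat.cast_zero, zero_mul, sub_zero]
    using (hasSum_besselITerm hx).mul_left (x / 2)

lemma hasSum_add_mul_besselITerm (hx : 0 < x) :
    HasSum (fun k : ℕ => (k + ν) * besselITerm ν x k) (x / 2 * besselI (ν - 1) x) := by
  simpa only [add_mul_besselITerm hx] using (hasSum_besselITerm hx).mul_left (x / 2)

lemma hasSum_mul_add_mul_besselITerm (hx : 0 < x) :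
    HasSum (fun k : ℕ => k * ((k + ν) * besselITerm ν x k)) ((x / 2) ^ 2 * besselI ν x) := by
  have h := (hasSum_natCast_mul_besselITerm (ν := ν - 1) hx).mul_left (x / 2)
  rw [sub_add_cancel, ← mul_assoc, ← sq] at h
  simpa only [add_mul_besselITerm hx, mul_left_comm] using h

lemma besselI_sub_one_sub_besselI_add_one (hx : 0 < x) :
    besselI (ν - 1) x - besselI (ν + 1) x = 2 * ν / x * besselI ν x := by
  have h := ((hasSum_natCast_mul_besselITerm hx).add ((hasSum_besselITerm hx).mul_left ν)).unique
    (by simpa only [add_mul] using hasSum_add_mul_besselITerm (ν := ν) hx)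
  field_simp
  linarith

lemma hasSum_sub_sq_mul_besselITerm (hx : 0 < x) (m : ℝ) :
    HasSum (fun k : ℕ => (k - m) ^ 2 * besselITerm ν x k)
      ((x / 2) ^ 2 * besselI ν x - (ν + 2 * m) * (x / 2 * besselI (ν + 1) x) +
        m ^ 2 * besselI ν x) := by
  have hterm (k : ℕ) : (k - m) ^ 2 * besselITerm ν x k = k * ((k + ν) * besselITerm ν x k) -
      (ν + 2 * m) * (k * besselITerm ν x k) + m ^ 2 * besselITerm ν x k := by ring
  simp_rw [hterm]
  exact ((hasSum_mul_add_mul_besselITerm hx).sub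
    ((hasSum_natCast_mul_besselITerm hx).mul_left _)).add ((hasSum_besselITerm hx).mul_left _)

lemma besselI_add_one_quadratic_le (hν : -1 < ν) (hx : 0 < x) :
    x * besselI (ν + 1) x ^ 2 + 2 * ν * (besselI (ν + 1) x * besselI ν x) ≤
      x * besselI ν x ^ 2 := by
  set A := besselI ν x
  set B := besselI (ν + 1) x
  have hA : 0 < A := besselI_pos hν hx
  set m := x / 2 * B / A with hm
  have hvar : 0 ≤ (x / 2) ^ 2 * A - (ν + 2 * m) * (x / 2 * B) + m ^ 2 * A :=
    (hasSum_sub_sq_mul_besselITerm hx m).nonneg fun k =>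
      mul_nonneg (sq_nonneg _) (besselITerm_pos hν hx k).le
  have hscale : 4 * A / x * ((x / 2) ^ 2 * A - (ν + 2 * m) * (x / 2 * B) + m ^ 2 * A) =
      x * A ^ 2 - (x * B ^ 2 + 2 * ν * (B * A)) := by
    rw [hm]
    field_simp
    ring
  have : 0 ≤ 4 * A / x := by positivity
  nlinarith [mul_nonneg this hvar]

lemma measurable_besselI (ν : ℝ) : Measurable (besselI ν) :=
  Measurable.tsum fun _ => by fun_prop

end BesselSeries

section AmosBounds

variable {ν x : ℝ}

/-- The function `x / (ν + √(ν² + x²))` of Amos's bounds on `h_ν(x)`; for `x > 0` it is the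
positive root `w` of `x w² + 2 ν w = x`. -/
noncomputable def amosBound (ν x : ℝ) : ℝ := x / (ν + √(ν ^ 2 + x ^ 2))

lemma add_sqrt_sq_add_sq_pos (ν : ℝ) (hx : x ≠ 0) : 0 < ν + √(ν ^ 2 + x ^ 2) := by
  have : |ν| < √(ν ^ 2 + x ^ 2) := by
    rw [← Real.sqrt_sq_eq_abs]
    exact Real.sqrt_lt_sqrt (sq_nonneg ν) (lt_add_of_pos_right _ (by positivity))
  linarith [neg_abs_le ν]

lemma amosBound_pos (ν : ℝ) (hx : 0 < x) : 0 < amosBound ν x :=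
  div_pos hx (add_sqrt_sq_add_sq_pos ν hx.ne')

lemma amosBound_eq_sqrt_sub_div (ν : ℝ) (hx : x ≠ 0) :
    amosBound ν x = (√(ν ^ 2 + x ^ 2) - ν) / x := by
  rw [amosBound, div_eq_div_iff (add_sqrt_sq_add_sq_pos ν hx).ne' hx]
  linear_combination -Real.sq_sqrt (by positivity : 0 ≤ ν ^ 2 + x ^ 2)

lemma inv_amosBound (ν : ℝ) (hx : x ≠ 0) : (amosBound ν x)⁻¹ = 2 * ν / x + amosBound ν x := by
  nth_rw 2 [amosBound_eq_sqrt_sub_div ν hx]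
  rw [amosBound, inv_div]
  ring

lemma le_amosBound_of_quadratic_le {w : ℝ} (hx : 0 < x) (hw : x * w ^ 2 + 2 * ν * w ≤ x) :
    w ≤ amosBound ν x := by
  rw [amosBound_eq_sqrt_sub_div ν hx.ne', le_div_iff₀ hx, le_sub_iff_add_le]
  exact Real.le_sqrt_of_sq_le (by nlinarith)

lemma amosBound_le_one (hν : 0 ≤ ν) (hx : 0 < x) : amosBound ν x ≤ 1 := by
  rw [amosBound, div_le_one (add_sqrt_sq_add_sq_pos ν hx.ne')]
  have : x ≤ √(ν ^ 2 + x ^ 2) := Real.le_sqrt_of_sq_le (by nlinarith)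
  linarith

lemma amosBound_mul_mul {r : ℝ} (hr : 0 < r) (ν x : ℝ) :
    amosBound (r * ν) (r * x) = amosBound ν x := by
  rw [amosBound, amosBound, mul_pow, mul_pow, ← mul_add, Real.sqrt_mul (sq_nonneg r),
    Real.sqrt_sq hr.le, ← mul_add, mul_div_mul_left _ _ hr.ne']

lemma continuousAt_amosBound (ν : ℝ) (hx : x ≠ 0) :
    ContinuousAt (fun p : ℝ × ℝ => amosBound p.1 p.2) (ν, x) :=
  ContinuousAt.div (by fun_prop) (by fun_prop) (add_sqrt_sq_add_sq_pos ν hx).ne'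

lemma besselRatio_pos (hν : 0 < ν) (hx : 0 < x) : 0 < besselRatio ν x :=
  div_pos (besselI_pos (by linarith) hx) (besselI_pos (by linarith) hx)

lemma inv_besselRatio (hν : 0 < ν) (hx : 0 < x) :
    (besselRatio ν x)⁻¹ = 2 * ν / x + besselRatio (ν + 1) x := by
  have hI : besselI ν x ≠ 0 := (besselI_pos (by linarith) hx).ne'
  rw [besselRatio, besselRatio, add_sub_cancel_right, inv_div, div_eq_iff hI, add_mul,
    div_mul_cancel₀ _ hI, ← besselI_sub_one_sub_besselI_add_one hx, sub_add_cancel]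

lemma besselRatio_le_amosBound (hν : 0 < ν) (hx : 0 < x) :
    besselRatio ν x ≤ amosBound (ν - 1) x := by
  have hI : 0 < besselI (ν - 1) x := besselI_pos (by linarith) hx
  have hquad := besselI_add_one_quadratic_le (ν := ν - 1) (by linarith) hx
  rw [sub_add_cancel] at hquad
  refine le_amosBound_of_quadratic_le hx ?_
  rw [besselRatio]
  field_simp
  linarith

lemma amosBound_le_besselRatio (hν : 0 < ν) (hx : 0 < x) :
    amosBound ν x ≤ besselRatio ν x := by
  have hupper := besselRatio_le_amosBound (by linarith : 0 < ν + 1) hx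
  rw [add_sub_cancel_right] at hupper
  rw [← inv_le_inv₀ (besselRatio_pos hν hx) (amosBound_pos ν hx), inv_besselRatio hν hx,
    inv_amosBound ν hx.ne']
  gcongr

lemma besselRatio_zero_right (hν : 0 < ν) : besselRatio ν 0 = 0 := by
  have (k : ℕ) : (0 : ℝ) ^ (2 * (k : ℝ) + ν) = 0 := Real.zero_rpow (by positivity)
  simp [besselRatio, besselI, this]

lemma besselRatio_mem_Icc (hν : 1 ≤ ν) (hx : 0 ≤ x) : besselRatio ν x ∈ Set.Icc 0 1 := by
  have hν0 : 0 < ν := by linarith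
  rcases hx.eq_or_lt with rfl | hx
  · simp [besselRatio_zero_right hν0]
  · exact ⟨(besselRatio_pos hν0 hx).le,
      (besselRatio_le_amosBound hν0 hx).trans (amosBound_le_one (by linarith) hx)⟩

lemma measurable_besselRatio (ν : ℝ) : Measurable (besselRatio ν) :=
  (measurable_besselI ν).div (measurable_besselI (ν - 1))

lemma tendsto_besselRatio {α : Type*} {l : Filter α} {ν x : α → ℝ} {t : ℝ} (ht : 0 < t)
    (hν : Tendsto ν l atTop) (hx : Tendsto (fun i => x i / ν i) l (𝓝 t)) :
    Tendsto (fun i => besselRatio (ν i) (x i)) l (𝓝 (amosBound 1 t)) := by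
  have hν_pos : ∀ᶠ i in l, 0 < ν i := hν.eventually_gt_atTop 0
  have hx_pos : ∀ᶠ i in l, 0 < x i := by
    filter_upwards [hν_pos, hx.eventually_const_lt ht] with i hνi hxi
    exact (div_pos_iff_of_pos_right hνi).1 hxi
  have hamos {c : ℝ} : Tendsto (fun i => amosBound (ν i - c) (x i)) l (𝓝 (amosBound 1 t)) := by
    have hshift : Tendsto (fun i => 1 - c / ν i) l (𝓝 1) := by
      simpa using (hν.const_div_atTop c).const_sub 1
    refine ((continuousAt_amosBound 1 ht.ne').tendsto.comp (hshift.prodMk_nhds hx)).congr' ?_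
    filter_upwards [hν_pos] with i hνi
    rw [Function.comp_apply, ← amosBound_mul_mul hνi, mul_sub, mul_one, mul_div_cancel₀ _ hνi.ne',
      mul_div_cancel₀ _ hνi.ne']
  refine tendsto_of_tendsto_of_tendsto_of_le_of_le' (by simpa using hamos (c := 0))
    (hamos (c := 1)) ?_ ?_
  · filter_upwards [hν_pos, hx_pos] with i hνi hxi using amosBound_le_besselRatio hνi hxi
  · filter_upwards [hν_pos, hx_pos] with i hνi hxi using besselRatio_le_amosBound hνi hxi

end AmosBounds

section GaussianNorm

lemma euclNorm_nonneg {n : ℕ} (z : Fin n → ℝ) : 0 ≤ euclNorm z := Real.sqrt_nonneg _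

lemma euclNorm_const_mul {n : ℕ} {a : ℝ} (ha : 0 ≤ a) (z : Fin n → ℝ) :
    euclNorm (fun i => a * z i) = a * euclNorm z := by
  simp_rw [euclNorm, mul_pow, ← Finset.mul_sum]
  rw [Real.sqrt_mul (sq_nonneg a), Real.sqrt_sq ha]

lemma measurable_euclNorm (n : ℕ) : Measurable (euclNorm (n := n)) := by
  unfold euclNorm
  fun_prop

lemma ae_tendsto_euclNorm_div_sqrt {Ω : Type*} [MeasurableSpace Ω] {P : Measure Ω}
    {X : ℕ → Ω → ℝ} (hX : MemLp (X 0) 2 P) (hindep : Pairwise fun i j => X i ⟂ᵢ[P] X j)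
    (hident : ∀ i, IdentDistrib (X i) (X 0) P P) :
    ∀ᵐ ω ∂P, Tendsto (fun n : ℕ => euclNorm (fun i : Fin n => X i ω) / √n) atTop
      (𝓝 √(∫ ω, X 0 ω ^ 2 ∂P)) := by
  have hsq : Measurable fun x : ℝ => x ^ 2 := by fun_prop
  filter_upwards [strong_law_ae_real (fun i ω => X i ω ^ 2) hX.integrable_sq
    (fun i j hij => (hindep hij).comp hsq hsq) fun i => (hident i).comp hsq] with ω hω
  refine hω.sqrt.congr fun n => ?_
  rw [euclNorm, Real.sqrt_div' _ n.cast_nonneg, Fin.sum_univ_eq_sum_range fun i => X i ω ^ 2]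

lemma integral_sq_gaussianReal_zero (v : NNReal) : ∫ x, x ^ 2 ∂gaussianReal 0 v = v := by
  have h := variance_fun_id_gaussianReal (μ := 0) (v := v)
  rw [variance_eq_integral (by fun_prop)] at h
  simpa using h

lemma tendsto_integral_stdGaussian_euclNorm {E : Type*} [NormedAddCommGroup E] [NormedSpace ℝ E]
    [CompleteSpace E] {f : ℕ → ℝ → E} {C : ℝ} {L : E} (hf : ∀ n, StronglyMeasurable (f n))
    (hC : ∀ᶠ n in atTop, ∀ r, 0 ≤ r → ‖f n r‖ ≤ C)
    (hL : Tendsto (fun p : ℕ × ℝ => f p.1 p.2) (atTop ×ˢ 𝓝 1) (𝓝 L)) :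
    Tendsto (fun n : ℕ => ∫ z, f n (euclNorm z / √n) ∂stdGaussian n) atTop (𝓝 L) := by
  obtain ⟨Ω, _, P, X, hmeas, hlaw, hindep, _⟩ := exists_iid ℕ (gaussianReal 0 1)
  have hlaw_pi (n : ℕ) : HasLaw (fun ω (i : Fin n) => X i ω) (stdGaussian n) P :=
    iIndepFun.hasLaw_pi (fun i => hlaw i) (hindep.precomp Fin.val_injective)
  have hf_norm (n : ℕ) : StronglyMeasurable fun z : Fin n → ℝ => f n (euclNorm z / √n) :=
    (hf n).comp_measurable ((measurable_euclNorm n).div_const _)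
  have hlimit : ∀ᵐ ω ∂P, Tendsto (fun n : ℕ => euclNorm (fun i : Fin n => X i ω) / √n) atTop
      (𝓝 1) := by
    have hsq : ∫ ω, X 0 ω ^ 2 ∂P = 1 := by
      simpa using ((hlaw 0).integral_comp (f := fun x : ℝ => x ^ 2) (by fun_prop)).trans
        (integral_sq_gaussianReal_zero 1)
    have hL2 : MemLp (X 0) 2 P :=
      (memLp_id_gaussianReal' 2 ENNReal.ofNat_ne_top).comp_measurePreserving
        ((hlaw 0).measurePreserving (hmeas 0))
    simpa only [hsq, Real.sqrt_one] using ae_tendsto_euclNorm_div_sqrt hL2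
      (fun i j hij => hindep.indepFun hij) fun i => (hlaw i).identDistrib (hlaw 0)
  have hconv : Tendsto (fun n : ℕ => ∫ ω, f n (euclNorm (fun i : Fin n => X i ω) / √n) ∂P) atTop
      (𝓝 (∫ _, L ∂P)) := by
    refine tendsto_integral_filter_of_norm_le_const (Eventually.of_forall fun n =>
      ((hf_norm n).comp_measurable (by fun_prop)).aestronglyMeasurable) ⟨C, ?_⟩ ?_
    · filter_upwards [hC] with n hn
      exact ae_of_all _ fun ω => hn _ (div_nonneg (euclNorm_nonneg _) (Real.sqrt_nonneg _))
    · filter_upwards [hlimit] with ω hω using hL.comp (tendsto_id.prodMk hω)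
  rw [integral_const, probReal_univ, one_smul] at hconv
  exact hconv.congr fun n => (hlaw_pi n).integral_comp (hf_norm n).aestronglyMeasurable

end GaussianNorm

lemma amosBound_one_two_mul_div_sqrt {s : ℝ} (hs : 0 < s) (c : ℝ) :
    amosBound 1 (2 * (c / √s)) = c / (√s / 2 + √(s / 4 + c ^ 2)) := by
  have hs' : 0 < √s := Real.sqrt_pos.2 hs
  have hc : √s / 2 * (2 * (c / √s)) = c := by field_simp
  rw [← amosBound_mul_mul (half_pos hs'), mul_one, hc, amosBound, div_pow, Real.sq_sqrt hs.le]
  norm_num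

lemma euclNorm_sqrt_mul_mul_div {n : ℕ} {s : ℝ} (hs : 0 < s) (c : ℝ) (z : Fin n → ℝ) :
    euclNorm (fun i => √s * z i) * (c * √n) / s = n * (c / √s * (euclNorm z / √n)) := by
  rw [euclNorm_const_mul (Real.sqrt_nonneg s)]
  nth_rw 2 [← Real.sq_sqrt hs.le]
  nth_rw 2 [← Real.sq_sqrt n.cast_nonneg]
  field_simp

lemma tendsto_besselRatio_half_natCast {a : ℝ} (ha : 0 < a) :
    Tendsto (fun p : ℕ × ℝ => besselRatio (p.1 / 2) (p.1 * (a * p.2))) (atTop ×ˢ 𝓝 1)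
      (𝓝 (amosBound 1 (2 * a))) := by
  have horder : Tendsto (fun p : ℕ × ℝ => (p.1 : ℝ) / 2) (atTop ×ˢ 𝓝 1) atTop :=
    (tendsto_natCast_atTop_atTop.comp tendsto_fst).atTop_div_const two_pos
  have hquot : Tendsto (fun p : ℕ × ℝ => 2 * (a * p.2)) (atTop ×ˢ 𝓝 1) (𝓝 (2 * a)) := by
    simpa using ((tendsto_snd (f := atTop) (g := 𝓝 (1 : ℝ))).const_mul a).const_mul 2
  refine tendsto_besselRatio (by positivity) horder (hquot.congr' ?_)
  filter_upwards [horder.eventually_gt_atTop 0] with p hp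
  have : (0 : ℝ) < p.1 := by linarith
  field_simp

lemma tendsto_integral_besselRatio_euclNorm_pow {a : ℝ} (ha : 0 < a) (k : ℕ) :
    Tendsto (fun n : ℕ =>
        ∫ z, besselRatio (n / 2) (n * (a * (euclNorm z / √n))) ^ k ∂stdGaussian n)
      atTop (𝓝 (amosBound 1 (2 * a) ^ k)) := by
  refine tendsto_integral_stdGaussian_euclNorm (C := 1)
    (f := fun n r => besselRatio (n / 2) (n * (a * r)) ^ k) (fun n => ?_) ?_
    ((tendsto_besselRatio_half_natCast ha).pow k)
  · exact (((measurable_besselRatio _).comp (by fun_prop)).pow_const k).stronglyMeasurable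
  · filter_upwards [eventually_ge_atTop 2] with n hn r hr
    have horder : (1 : ℝ) ≤ n / 2 := by
      rw [one_le_div two_pos]
      exact_mod_cast hn
    have hmem := besselRatio_mem_Icc horder (x := n * (a * r)) (by positivity)
    rw [Real.norm_of_nonneg (pow_nonneg hmem.1 k)]
    exact pow_le_one₀ hmem.1 hmem.2

theorem limit_h_sq_centered (s c : ℝ) (hs : 0 < s) (hc : 0 < c) :
    Tendsto (fun n : ℕ =>
        ∫ z, (besselRatio ((n : ℝ) / 2)
            (euclNorm (fun i => Real.sqrt s * z i) * (c * Real.sqrt n) / s)) ^ 2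
          ∂(stdGaussian n))
      atTop (nhds (c ^ 2 / (Real.sqrt s / 2 + Real.sqrt (s / 4 + c ^ 2)) ^ 2)) := by
  simp_rw [euclNorm_sqrt_mul_mul_div hs]
  rw [← div_pow, ← amosBound_one_two_mul_div_sqrt hs]
  exact tendsto_integral_besselRatio_euclNorm_pow (div_pos hc (Real.sqrt_pos.2 hs)) 2
end

section
/- For 0 ≤ ρ₂ < ρ₁ and σ > 0 and integer n ≥ 1, ∫₀^∞ (F_{χ²_n(ρ₂²/σ²)}(y) − F_{χ²_n(ρ₁²/σ²)}(y)) dy = (ρ₁² − ρ₂²)/σ², and the integrand is nonnegative for all y. -/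
/-- Central chi-square density with `k` degrees of freedom. -/
noncomputable def chiSqPdf (k : ℕ) (y : ℝ) : ℝ :=
  y ^ ((k : ℝ) / 2 - 1) * Real.exp (-y / 2) / (2 ^ ((k : ℝ) / 2) * Real.Gamma ((k : ℝ) / 2))

/-- Noncentral chi-square density (Poisson-weighted mixture of central chi-square densities). -/
noncomputable def ncChiSqPdf (n : ℕ) (lam y : ℝ) : ℝ :=
  ∑' i : ℕ, Real.exp (-lam / 2) * (lam / 2) ^ i / i.factorial * chiSqPdf (n + 2 * i) y

/-- Noncentral chi-square CDF. -/
noncomputable def ncChiSqCdf (n : ℕ) (lam y : ℝ) : ℝ :=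
  ∫ t in Set.Ioc (0 : ℝ) y, ncChiSqPdf n lam t

/-!
The noncentral chi-square law with noncentrality `λ` is the mixture of the gamma laws of shape
`n / 2 + N` and rate `1 / 2`, where `N` is Poisson of rate `λ / 2`. Raising the shape of a gamma
law of rate `r` by one lowers its CDF by `1 / r` times the gamma density of the raised shape, so
the area lost is exactly `1 / r`. Hence the area between the central and the noncentral CDF is
`E[N] / (1 / 2) = λ`, and subtracting two such areas gives the integral. For the sign, a Poisson
variable of rate `t ≥ s` is the sum of independent Poisson variables of rates `s` and `t - s`,
and a gamma CDF decreases when its shape is raised.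
-/

open Function MeasureTheory ProbabilityTheory Set TopologicalSpace
open scoped NNReal Nat

lemma aestronglyMeasurable_uncurry_of_countable {ι α E : Type*} [MeasurableSpace ι] [Countable ι]
    [MeasurableSingletonClass ι] [MeasurableSpace α] [TopologicalSpace E] [PseudoMetrizableSpace E]
    {μ : Measure ι} {ν : Measure α} {f : ι → α → E}
    (hf : ∀ i, AEStronglyMeasurable (f i) ν) : AEStronglyMeasurable (uncurry f) (μ.prod ν) := by
  let _ : TopologicalSpace ι := ⊥
  have : DiscreteTopology ι := ⟨rfl⟩
  refine ⟨uncurry fun i ↦ (hf i).mk (f i),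
    stronglyMeasurable_uncurry_of_continuous_of_stronglyMeasurable
      (fun _ ↦ continuous_of_discreteTopology) fun i ↦ (hf i).stronglyMeasurable_mk, ?_⟩
  have hae : ∀ᵐ x ∂ν, ∀ i, f i x = (hf i).mk (f i) x := ae_all_iff.2 fun i ↦ (hf i).ae_eq_mk
  filter_upwards [Measure.quasiMeasurePreserving_snd.ae hae] with p hp using hp p.1

lemma integrable_uncurry_of_countable {ι α E : Type*} [MeasurableSpace ι] [Countable ι]
    [MeasurableSingletonClass ι] [MeasurableSpace α] [NormedAddCommGroup E] {μ : Measure ι}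
    {ν : Measure α} [SFinite ν] {f : ι → α → E} (hf : ∀ i, Integrable (f i) ν)
    (hnorm : Integrable (fun i ↦ ∫ x, ‖f i x‖ ∂ν) μ) : Integrable (uncurry f) (μ.prod ν) :=
  (integrable_prod_iff (aestronglyMeasurable_uncurry_of_countable fun i ↦ (hf i).1)).2
    ⟨.of_forall hf, hnorm⟩

lemma integral_conv_le_of_antitone {M : Type*} [AddMonoid M] [Preorder M] [CanonicallyOrderedAdd M]
    [MeasurableSpace M] [MeasurableAdd₂ M] {μ ν : Measure M} [SFinite μ]
    [IsProbabilityMeasure ν] {f : M → ℝ} (hf : Antitone f) (hμ : Integrable f μ)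
    (hconv : Integrable f (μ ∗ ν)) : ∫ x, f x ∂(μ ∗ ν) ≤ ∫ x, f x ∂μ := by
  have hadd : AEMeasurable (fun p : M × M ↦ p.1 + p.2) (μ.prod ν) := by fun_prop
  calc ∫ x, f x ∂(μ ∗ ν)
      = ∫ p, f (p.1 + p.2) ∂μ.prod ν := integral_map hadd hconv.1
    _ ≤ ∫ p, f p.1 ∂μ.prod ν :=
        integral_mono ((integrable_map_measure hconv.1 hadd).1 hconv) (hμ.comp_fst ν)
          fun _ ↦ hf le_self_add
    _ = ∫ x, f x ∂μ := by simp [integral_fun_fst]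

lemma hasSum_poissonMeasure_mul_natCast (r : ℝ≥0) :
    HasSum (fun n : ℕ ↦ Real.exp (-r) * r ^ n / n ! * (n : ℝ)) r := by
  rw [← hasSum_nat_add_iff' 1]
  have hshift (n : ℕ) : Real.exp (-r) * r ^ (n + 1) / (n + 1)! * (n + 1 : ℝ) =
      r * (Real.exp (-r) * r ^ n / n !) := by
    rw [Nat.factorial_succ]
    push_cast
    field_simp
    ring
  simpa [hshift] using (hasSum_one_poissonMeasure r).mul_left (r : ℝ)

lemma integrable_natCast_poissonMeasure (r : ℝ≥0) :
    Integrable (fun n : ℕ ↦ (n : ℝ)) (poissonMeasure r) := by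
  simpa [integrable_poissonMeasure_iff] using (hasSum_poissonMeasure_mul_natCast r).summable

lemma integral_natCast_poissonMeasure (r : ℝ≥0) : ∫ n, (n : ℝ) ∂poissonMeasure r = r := by
  simpa [integral_poissonMeasure] using (hasSum_poissonMeasure_mul_natCast r).tsum_eq

section Gamma

variable {a r : ℝ}

lemma integral_gammaPDFReal_eq_one (ha : 0 < a) (hr : 0 < r) : ∫ x, gammaPDFReal a r x = 1 := by
  rw [integral_eq_lintegral_of_nonneg_ae (.of_forall (gammaPDFReal_nonneg ha hr))
    (stronglyMeasurable_gammaPDFReal a r).aestronglyMeasurable]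
  exact (ENNReal.toReal_eq_one_iff _).2 (lintegral_gammaPDF_eq_one ha hr)

lemma integrable_gammaPDFReal (ha : 0 < a) (hr : 0 < r) : Integrable (gammaPDFReal a r) :=
  integrable_of_integral_eq_one (integral_gammaPDFReal_eq_one ha hr)

lemma gammaPDFReal_of_nonpos (ha : a ≠ 1) (r : ℝ) {x : ℝ} (hx : x ≤ 0) :
    gammaPDFReal a r x = 0 := by
  rcases hx.eq_or_lt with rfl | hx
  · simp [gammaPDFReal, Real.zero_rpow (sub_ne_zero.2 ha)]
  · exact if_neg hx.not_ge

lemma gammaPDFReal_add_one (ha : a ≠ 0) (hr : r ≠ 0) {x : ℝ} (hx : 0 < x) :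
    gammaPDFReal (a + 1) r x = r * x / a * gammaPDFReal a r x := by
  simp only [gammaPDFReal, if_pos hx.le, Real.Gamma_add_one ha, Real.rpow_add_one hr,
    Real.rpow_sub_one hx.ne', add_sub_cancel_right]
  field_simp

lemma continuousOn_gammaPDFReal (ha : 1 ≤ a) : ContinuousOn (gammaPDFReal a r) (Ici 0) := by
  have hpow := Real.continuous_rpow_const (sub_nonneg.2 ha)
  have hformula : Continuous fun x : ℝ ↦
      r ^ a / Real.Gamma a * x ^ (a - 1) * Real.exp (-(r * x)) := by fun_prop
  exact hformula.continuousOn.congr fun x hx ↦ if_pos hx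

lemma hasDerivAt_gammaPDFReal {x : ℝ} (hx : 0 < x) :
    HasDerivAt (gammaPDFReal a r) (((a - 1) / x - r) * gammaPDFReal a r x) x := by
  have hpow := Real.hasDerivAt_rpow_const (x := x) (p := a - 1) (.inl hx.ne')
  have hexp : HasDerivAt (fun x ↦ Real.exp (-(r * x))) (Real.exp (-(r * x)) * -(r * 1)) x :=
    ((hasDerivAt_id x).const_mul r).neg.exp
  have hformula := (hpow.const_mul (r ^ a / Real.Gamma a)).mul hexp
  refine (hformula.congr_of_eventuallyEq ?_).congr_deriv ?_
  · filter_upwards [Ioi_mem_nhds hx] with y hy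
    exact if_pos (le_of_lt hy)
  · simp only [gammaPDFReal, if_pos hx.le, Real.rpow_sub_one hx.ne' (a - 1)]
    field_simp
    ring

lemma hasDerivAt_gammaPDFReal_add_one_div (ha : a ≠ 0) (hr : r ≠ 0) {x : ℝ} (hx : 0 < x) :
    HasDerivAt (fun x ↦ gammaPDFReal (a + 1) r x / r)
      (gammaPDFReal a r x - gammaPDFReal (a + 1) r x) x := by
  refine ((hasDerivAt_gammaPDFReal hx).div_const r).congr_deriv ?_
  rw [gammaPDFReal_add_one ha hr hx]
  field_simp
  ring

lemma cdf_gammaMeasure_eq_setIntegral_Ioc (ha : 0 < a) (hr : 0 < r) (y : ℝ) :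
    cdf (gammaMeasure a r) y = ∫ x in Ioc 0 y, gammaPDFReal a r x := by
  rw [cdf_gammaMeasure_eq_integral ha hr]
  refine setIntegral_eq_of_subset_of_ae_sdiff_eq_zero measurableSet_Iic.nullMeasurableSet
    Ioc_subset_Iic_self ?_
  filter_upwards [Measure.ae_ne volume 0] with x hx hxy
  have hneg : x < 0 := lt_of_le_of_ne (not_lt.1 fun h ↦ hxy.2 ⟨h, hxy.1⟩) hx
  exact if_neg hneg.not_ge

lemma cdf_gammaMeasure_sub_cdf_add_one (ha : 0 < a) (hr : 0 < r) (y : ℝ) :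
    cdf (gammaMeasure a r) y - cdf (gammaMeasure (a + 1) r) y = gammaPDFReal (a + 1) r y / r := by
  have ha_ne : a + 1 ≠ 1 := by simpa using ha.ne'
  rw [cdf_gammaMeasure_eq_setIntegral_Ioc ha hr,
    cdf_gammaMeasure_eq_setIntegral_Ioc (add_pos ha one_pos) hr]
  rcases le_or_gt y 0 with hy | hy
  · simp [Ioc_eq_empty hy.not_gt, gammaPDFReal_of_nonpos ha_ne r hy]
  have hint := (integrable_gammaPDFReal ha hr).sub (integrable_gammaPDFReal (add_pos ha one_pos) hr)
  have hcont : ContinuousOn (fun x ↦ gammaPDFReal (a + 1) r x / r) (Icc 0 y) :=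
    ((continuousOn_gammaPDFReal (by linarith)).div_const r).mono Icc_subset_Ici_self
  rw [← integral_sub (integrable_gammaPDFReal ha hr).integrableOn
      (integrable_gammaPDFReal (add_pos ha one_pos) hr).integrableOn,
    ← intervalIntegral.integral_of_le hy.le,
    intervalIntegral.integral_eq_sub_of_hasDerivAt_of_le hy.le hcont
      (fun x hx ↦ hasDerivAt_gammaPDFReal_add_one_div ha.ne' hr.ne' hx.1) hint.intervalIntegrable,
    gammaPDFReal_of_nonpos ha_ne r le_rfl, zero_div, sub_zero]

lemma antitone_cdf_gammaMeasure_add_natCast (ha : 0 < a) (hr : 0 < r) (y : ℝ) :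
    Antitone fun i : ℕ ↦ cdf (gammaMeasure (a + i) r) y := by
  refine antitone_nat_of_succ_le fun i ↦ sub_nonneg.1 ?_
  have hi : 0 < a + i := by positivity
  rw [Nat.cast_succ, ← add_assoc, cdf_gammaMeasure_sub_cdf_add_one hi hr]
  exact div_nonneg (gammaPDFReal_nonneg (by positivity) hr y) hr.le

lemma cdf_gammaMeasure_sub_cdf_add_natCast (ha : 0 < a) (hr : 0 < r) (i : ℕ) (y : ℝ) :
    cdf (gammaMeasure a r) y - cdf (gammaMeasure (a + i) r) y =
      ∑ m ∈ Finset.range i, gammaPDFReal (a + m + 1) r y / r := by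
  have hstep (m : ℕ) : gammaPDFReal (a + m + 1) r y / r =
      cdf (gammaMeasure (a + m) r) y - cdf (gammaMeasure (a + (m + 1 : ℕ)) r) y := by
    rw [← cdf_gammaMeasure_sub_cdf_add_one (by positivity) hr, Nat.cast_succ, add_assoc]
  simp only [hstep]
  rw [Finset.sum_range_sub' fun m : ℕ ↦ cdf (gammaMeasure (a + m) r) y]
  simp

lemma integrable_cdf_gammaMeasure_sub_cdf_add_natCast (ha : 0 < a) (hr : 0 < r) (i : ℕ) :
    Integrable fun y ↦ cdf (gammaMeasure a r) y - cdf (gammaMeasure (a + i) r) y := by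
  simp only [cdf_gammaMeasure_sub_cdf_add_natCast ha hr]
  exact integrable_finsetSum _ fun m _ ↦ (integrable_gammaPDFReal (by positivity) hr).div_const r

lemma integral_cdf_gammaMeasure_sub_cdf_add_natCast (ha : 0 < a) (hr : 0 < r) (i : ℕ) :
    ∫ y, (cdf (gammaMeasure a r) y - cdf (gammaMeasure (a + i) r) y) = i / r := by
  simp only [cdf_gammaMeasure_sub_cdf_add_natCast ha hr]
  rw [integral_finsetSum _ fun m _ ↦ (integrable_gammaPDFReal (by positivity) hr).div_const r]
  have hterm (m : ℕ) : ∫ y, gammaPDFReal (a + m + 1) r y / r = 1 / r := by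
    rw [integral_div, integral_gammaPDFReal_eq_one (by positivity) hr]
  simp only [hterm, Finset.sum_const, Finset.card_range, nsmul_eq_mul, mul_one_div]

section Mixture

variable {μ : Measure ℕ}

lemma integrable_cdf_gammaMeasure_add_natCast [IsFiniteMeasure μ] (a r y : ℝ) :
    Integrable (fun i : ℕ ↦ cdf (gammaMeasure (a + i) r) y) μ :=
  .of_bound .of_discrete 1 <| .of_forall fun i ↦ by
    rw [Real.norm_of_nonneg (cdf_nonneg _ y)]
    exact cdf_le_one _ y

lemma setIntegral_gammaMixture [IsFiniteMeasure μ] (ha : 0 < a) (hr : 0 < r) (y : ℝ) :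
    ∫ x in Ioc 0 y, ∫ i, gammaPDFReal (a + i) r x ∂μ =
      ∫ i, cdf (gammaMeasure (a + i) r) y ∂μ := by
  have hpos (i : ℕ) : 0 < a + i := by positivity
  simp only [cdf_gammaMeasure_eq_setIntegral_Ioc (hpos _) hr]
  refine (integral_integral_swap (integrable_uncurry_of_countable
    (fun i ↦ (integrable_gammaPDFReal (hpos i) hr).integrableOn) ?_)).symm
  simp only [Real.norm_of_nonneg (gammaPDFReal_nonneg (hpos _) hr _),
    ← cdf_gammaMeasure_eq_setIntegral_Ioc (hpos _) hr]
  exact integrable_cdf_gammaMeasure_add_natCast a r y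

lemma integrable_uncurry_cdf_gammaMeasure_sub (ha : 0 < a) (hr : 0 < r)
    (hμ : Integrable (fun i : ℕ ↦ (i : ℝ)) μ) :
    Integrable (uncurry fun (i : ℕ) y ↦
      cdf (gammaMeasure a r) y - cdf (gammaMeasure (a + i) r) y) (μ.prod volume) := by
  have hnonneg (i : ℕ) (y : ℝ) :
      0 ≤ cdf (gammaMeasure a r) y - cdf (gammaMeasure (a + i) r) y := by
    simpa using antitone_cdf_gammaMeasure_add_natCast ha hr y i.zero_le
  refine integrable_uncurry_of_countable (integrable_cdf_gammaMeasure_sub_cdf_add_natCast ha hr) ?_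
  simp only [Real.norm_of_nonneg (hnonneg _ _), integral_cdf_gammaMeasure_sub_cdf_add_natCast ha hr]
  exact hμ.div_const r

variable [IsProbabilityMeasure μ]

lemma cdf_sub_gammaMixture_eq_integral (a r y : ℝ) :
    cdf (gammaMeasure a r) y - ∫ i, cdf (gammaMeasure (a + i) r) y ∂μ =
      ∫ i : ℕ, (cdf (gammaMeasure a r) y - cdf (gammaMeasure (a + i) r) y) ∂μ := by
  rw [integral_sub (integrable_const _) (integrable_cdf_gammaMeasure_add_natCast a r y)]
  simp

lemma integrable_cdf_sub_gammaMixture (ha : 0 < a) (hr : 0 < r)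
    (hμ : Integrable (fun i : ℕ ↦ (i : ℝ)) μ) :
    Integrable fun y ↦
      cdf (gammaMeasure a r) y - ∫ i, cdf (gammaMeasure (a + i) r) y ∂μ := by
  simp only [cdf_sub_gammaMixture_eq_integral]
  exact (integrable_uncurry_cdf_gammaMeasure_sub ha hr hμ).integral_prod_right

lemma integral_cdf_sub_gammaMixture (ha : 0 < a) (hr : 0 < r)
    (hμ : Integrable (fun i : ℕ ↦ (i : ℝ)) μ) :
    ∫ y, (cdf (gammaMeasure a r) y - ∫ i, cdf (gammaMeasure (a + i) r) y ∂μ) =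
      (∫ i, (i : ℝ) ∂μ) / r := by
  simp only [cdf_sub_gammaMixture_eq_integral]
  rw [← integral_integral_swap (integrable_uncurry_cdf_gammaMeasure_sub ha hr hμ)]
  simp only [integral_cdf_gammaMeasure_sub_cdf_add_natCast ha hr, integral_div]

end Mixture

end Gamma

lemma chiSqPdf_eq_gammaPDFReal (k : ℕ) {y : ℝ} (hy : 0 ≤ y) :
    chiSqPdf k y = gammaPDFReal (k / 2) (1 / 2) y := by
  rw [chiSqPdf, gammaPDFReal, if_pos hy, Real.div_rpow zero_le_one zero_le_two, Real.one_rpow,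
    show -y / 2 = -(1 / 2 * y) by ring]
  field_simp

section NoncentralChiSq

variable {n : ℕ}

lemma ncChiSqPdf_eq_integral_poissonMeasure (n : ℕ) {lam y : ℝ} (hlam : 0 ≤ lam) (hy : 0 ≤ y) :
    ncChiSqPdf n lam y =
      ∫ i, gammaPDFReal (n / 2 + i) (1 / 2) y ∂poissonMeasure (lam / 2).toNNReal := by
  have hshape (i : ℕ) : ((n + 2 * i : ℕ) : ℝ) / 2 = n / 2 + i := by push_cast; ring
  simp only [ncChiSqPdf, chiSqPdf_eq_gammaPDFReal _ hy, hshape, neg_div, integral_poissonMeasure,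
    Real.coe_toNNReal _ (div_nonneg hlam zero_le_two), smul_eq_mul]

lemma ncChiSqCdf_eq_integral_poissonMeasure (hn : n ≠ 0) {lam : ℝ} (hlam : 0 ≤ lam) (y : ℝ) :
    ncChiSqCdf n lam y =
      ∫ i, cdf (gammaMeasure (n / 2 + i) (1 / 2)) y ∂poissonMeasure (lam / 2).toNNReal := by
  rw [← setIntegral_gammaMixture (by positivity) (by norm_num)]
  exact setIntegral_congr_fun measurableSet_Ioc fun x hx ↦
    ncChiSqPdf_eq_integral_poissonMeasure n hlam hx.1.le

lemma ncChiSqCdf_of_nonpos (n : ℕ) (lam : ℝ) {y : ℝ} (hy : y ≤ 0) : ncChiSqCdf n lam y = 0 := by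
  rw [ncChiSqCdf, Ioc_eq_empty hy.not_gt, setIntegral_empty]

lemma antitoneOn_ncChiSqCdf (hn : n ≠ 0) (y : ℝ) :
    AntitoneOn (fun lam ↦ ncChiSqCdf n lam y) (Ici 0) := by
  intro lam₁ h₁ lam₂ h₂ hle
  have hrate : (lam₁ / 2).toNNReal ≤ (lam₂ / 2).toNNReal := by gcongr
  obtain ⟨t, ht⟩ := exists_add_of_le hrate
  simp only [ncChiSqCdf_eq_integral_poissonMeasure hn h₁,
    ncChiSqCdf_eq_integral_poissonMeasure hn h₂, ht]
  rw [← poissonMeasure_conv_poissonMeasure]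
  exact integral_conv_le_of_antitone
    (antitone_cdf_gammaMeasure_add_natCast (by positivity) (by norm_num) y)
    (integrable_cdf_gammaMeasure_add_natCast _ _ y) (integrable_cdf_gammaMeasure_add_natCast _ _ y)

lemma integrable_cdf_gammaMeasure_sub_ncChiSqCdf (hn : n ≠ 0) {lam : ℝ} (hlam : 0 ≤ lam) :
    Integrable fun y ↦ cdf (gammaMeasure (n / 2) (1 / 2)) y - ncChiSqCdf n lam y := by
  simp only [ncChiSqCdf_eq_integral_poissonMeasure hn hlam]
  exact integrable_cdf_sub_gammaMixture (by positivity) (by norm_num)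
    (integrable_natCast_poissonMeasure _)

lemma integral_cdf_gammaMeasure_sub_ncChiSqCdf (hn : n ≠ 0) {lam : ℝ} (hlam : 0 ≤ lam) :
    ∫ y, (cdf (gammaMeasure (n / 2) (1 / 2)) y - ncChiSqCdf n lam y) = lam := by
  simp only [ncChiSqCdf_eq_integral_poissonMeasure hn hlam]
  rw [integral_cdf_sub_gammaMixture (by positivity) (by norm_num)
    (integrable_natCast_poissonMeasure _), integral_natCast_poissonMeasure,
    Real.coe_toNNReal _ (div_nonneg hlam zero_le_two)]
  ring

lemma integral_ncChiSqCdf_sub (hn : n ≠ 0) {lam₁ lam₂ : ℝ} (h₁ : 0 ≤ lam₁) (h₂ : 0 ≤ lam₂) :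
    ∫ y in Ioi 0, (ncChiSqCdf n lam₁ y - ncChiSqCdf n lam₂ y) = lam₂ - lam₁ := by
  let G := cdf (gammaMeasure (n / 2) (1 / 2))
  calc ∫ y in Ioi 0, (ncChiSqCdf n lam₁ y - ncChiSqCdf n lam₂ y)
      = ∫ y, (ncChiSqCdf n lam₁ y - ncChiSqCdf n lam₂ y) :=
        setIntegral_eq_integral_of_forall_compl_eq_zero fun y hy ↦ by
          simp only [ncChiSqCdf_of_nonpos n _ (not_lt.1 hy), sub_self]
    _ = ∫ y, ((G y - ncChiSqCdf n lam₂ y) - (G y - ncChiSqCdf n lam₁ y)) := by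
        simp only [sub_sub_sub_cancel_left]
    _ = lam₂ - lam₁ := by
        rw [integral_sub (integrable_cdf_gammaMeasure_sub_ncChiSqCdf hn h₂)
            (integrable_cdf_gammaMeasure_sub_ncChiSqCdf hn h₁),
          integral_cdf_gammaMeasure_sub_ncChiSqCdf hn h₂,
          integral_cdf_gammaMeasure_sub_ncChiSqCdf hn h₁]

end NoncentralChiSq

theorem cdf_difference_integral (n : ℕ) (hn : 1 ≤ n) (σ ρ₁ ρ₂ : ℝ)
    (hσ : 0 < σ) (hρ₂ : 0 ≤ ρ₂) (hρ : ρ₂ < ρ₁) :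
    (∫ y in Set.Ioi (0 : ℝ),
        (ncChiSqCdf n (ρ₂ ^ 2 / σ ^ 2) y - ncChiSqCdf n (ρ₁ ^ 2 / σ ^ 2) y)) =
      (ρ₁ ^ 2 - ρ₂ ^ 2) / σ ^ 2 ∧
    ∀ y : ℝ, 0 ≤ ncChiSqCdf n (ρ₂ ^ 2 / σ ^ 2) y - ncChiSqCdf n (ρ₁ ^ 2 / σ ^ 2) y := by
  have hn₀ : n ≠ 0 := Nat.one_le_iff_ne_zero.1 hn
  have h₁ : 0 ≤ ρ₁ ^ 2 / σ ^ 2 := by positivity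
  have h₂ : 0 ≤ ρ₂ ^ 2 / σ ^ 2 := by positivity
  have hle : ρ₂ ^ 2 / σ ^ 2 ≤ ρ₁ ^ 2 / σ ^ 2 := by gcongr
  exact ⟨by rw [integral_ncChiSqCdf_sub hn₀ h₂ h₁, sub_div],
    fun y ↦ sub_nonneg.2 (antitoneOn_ncChiSqCdf hn₀ y h₂ h₁ hle)⟩
end

section
/- Let X_R be uniformly distributed on the sphere of radius R in ℝⁿ and Z ~ N(0, I_n) independent of X_R, and let Y = X_R + √s Z for s > 0. Then the conditional expectation satisfies E[X_R | Y = y] = (R y/‖y‖) h_{n/2}(‖y‖R/s), where h_{n/2} is the ratio I_{n/2}/I_{n/2−1} of modified Bessel functions of the first kind. -/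
/- The Gaussian weight `exp (-‖y - x‖² / 2s)` is, on the sphere, a constant multiple of
`exp ⟪y / s, x⟫`, so the claim is a formula for the mean direction of the von Mises–Fisher
distribution. Reflections fixing `y` force that mean to be a multiple of `y`; the multiple is the
ratio of `∫ exp ⟪y, x⟫ ⟪y, x⟫` to `∫ exp ⟪y, x⟫`. Both integrals are expanded in the moments
`∫ ⟪y, x⟫ ^ (2k)`. The moments satisfy a two-term recursion, the spherical analogue of Stein's
identity, obtained by differentiating the vanishing of `∫ g ⟪y + tv, x⟫ ⟪w, x⟫` for `w ⟂ y + tv`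
at `t = 0`. Solving it by Gamma functions turns the two expansions into Bessel series. -/

open MeasureTheory

/-- Uniform (surface/Hausdorff) measure on the sphere of radius `R` in `ℝⁿ`. -/
noncomputable def sphereMeasure (n : ℕ) (R : ℝ) : Measure (EuclideanSpace ℝ (Fin n)) :=
  (MeasureTheory.Measure.hausdorffMeasure ((n : ℝ) - 1)).restrict
    (Metric.sphere (0 : EuclideanSpace ℝ (Fin n)) R)

section CompactSupport

variable {X : Type*} [TopologicalSpace X] [T2Space X] [MeasurableSpace X]
  [BorelSpace X] {μ : Measure X} [IsFiniteMeasure μ] {K : Set X}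

lemma integrable_of_ae_mem_isCompact {F : Type*} [NormedAddCommGroup F] {f : X → F}
    (hf : Continuous f) (hK : IsCompact K) (hμ : ∀ᵐ x ∂μ, x ∈ K) : Integrable f μ := by
  rw [← Measure.restrict_eq_self_of_ae_mem hμ]
  exact hf.continuousOn.integrableOn_compact hK

lemma hasDerivAt_integral_of_ae_mem_isCompact [SecondCountableTopology X] {F F' : ℝ → X → ℝ}
    (hK : IsCompact K) (hμ : ∀ᵐ x ∂μ, x ∈ K) (hF : ∀ t, Continuous (F t))
    (hF' : Continuous (Function.uncurry F')) (h : ∀ t x, HasDerivAt (F · x) (F' t x) t) (t₀ : ℝ) :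
    HasDerivAt (fun t => ∫ x, F t x ∂μ) (∫ x, F' t₀ x ∂μ) t₀ := by
  obtain ⟨C, hC⟩ := ((isCompact_closedBall t₀ 1).prod hK).exists_bound_of_continuousOn
    hF'.continuousOn
  refine (hasDerivAt_integral_of_dominated_loc_of_deriv_le (bound := fun _ => C)
    (Metric.closedBall_mem_nhds t₀ one_pos) (.of_forall fun t => (hF t).aestronglyMeasurable)
    (integrable_of_ae_mem_isCompact (hF t₀) hK hμ)
    (hF'.comp (Continuous.prodMk_right t₀)).aestronglyMeasurable ?_ (integrable_const C)
    (.of_forall fun x t _ => h t x)).2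
  filter_upwards [hμ] with x hx t ht using hC (t, x) ⟨ht, hx⟩

end CompactSupport

lemma hasDerivAt_comp_add_mul_mul_sub {g g' : ℝ → ℝ} (hg : ∀ t, HasDerivAt g (g' t) t)
    (a b c d t : ℝ) :
    HasDerivAt (fun t => g (a + t * b) * (c - t * d))
      (g' (a + t * b) * b * (c - t * d) - g (a + t * b) * d) t :=
  (((hg _).comp t ((hasDerivAt_mul_const b).const_add a)).mul
    ((hasDerivAt_mul_const d).const_sub c)).congr_deriv (by rw [mul_neg, ← sub_eq_add_neg]; rfl)

lemma besselI_eq_rpow_mul_tsum (ν : ℝ) {z : ℝ} (hz : 0 < z) :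
    besselI ν z =
      (z / 2) ^ ν * ∑' k : ℕ, (z / 2) ^ (2 * k) / (k.factorial * Real.Gamma (k + ν + 1)) := by
  rw [besselI, ← tsum_mul_left]
  congr! 2 with k
  rw [add_comm, Real.rpow_add (half_pos hz), mul_div_assoc, ← Nat.cast_ofNat, ← Nat.cast_mul,
    Real.rpow_natCast]

section InnerProduct

open Metric Module
open scoped RealInnerProductSpace

variable {E : Type*} [NormedAddCommGroup E] [InnerProductSpace ℝ E]

lemma norm_sq_mul_sum_inner_sq {ι : Type*} [Fintype ι] (y x : E)
    (b : OrthonormalBasis ι ℝ (ℝ ∙ y)ᗮ) :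
    ‖y‖ ^ 2 * ∑ j, ⟪(b j : E), x⟫ ^ 2 = ‖y‖ ^ 2 * ‖x‖ ^ 2 - ⟪y, x⟫ ^ 2 := by
  have hsum : ∑ j, ⟪(b j : E), x⟫ ^ 2 = ‖(ℝ ∙ y)ᗮ.orthogonalProjectionOnto x‖ ^ 2 := by
    rw [← b.sum_sq_norm_inner_right]
    simp only [Submodule.inner_orthogonalProjectionOnto_eq_of_mem_left, Real.norm_eq_abs, sq_abs]
  have hproj : ‖y‖ ^ 2 * ‖(ℝ ∙ y).orthogonalProjectionOnto x‖ ^ 2 = ⟪y, x⟫ ^ 2 := by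
    have hsmul := congrArg (⟪·, x⟫) (Submodule.smul_starProjection_singleton ℝ (v := y) x)
    rw [← (ℝ ∙ y).re_inner_starProjection_eq_normSq x, sq ⟪y, x⟫]
    simpa only [real_inner_smul_left, RCLike.ofReal_real_eq_id, id, RCLike.re_to_real]
      using hsmul
  rw [hsum, Submodule.norm_sq_eq_add_norm_sq_projection x (ℝ ∙ y), ← hproj]
  ring

lemma cast_finrank_orthogonal_span_singleton [FiniteDimensional ℝ E] {y : E} (hy : y ≠ 0) :
    (finrank ℝ (ℝ ∙ y)ᗮ : ℝ) = finrank ℝ E - 1 := by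
  rw [← (ℝ ∙ y).finrank_add_finrank_orthogonal, finrank_span_singleton hy]
  push_cast
  ring

lemma exp_neg_norm_sub_sq_div {x : E} {R : ℝ} (hx : x ∈ sphere (0 : E) R) (s : ℝ) (y : E) :
    Real.exp (-‖y - x‖ ^ 2 / (2 * s)) =
      Real.exp (-(‖y‖ ^ 2 + R ^ 2) / (2 * s)) * Real.exp ⟪s⁻¹ • y, x⟫ := by
  rw [← Real.exp_add, norm_sub_sq_real, mem_sphere_zero_iff_norm.1 hx, real_inner_smul_left]
  ring_nf

end InnerProduct

section Sphere

open Metric Module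
open scoped RealInnerProductSpace

variable {E : Type*} [NormedAddCommGroup E] [InnerProductSpace ℝ E] [MeasurableSpace E]

/-- Invariance of a measure under the full orthogonal group of the space, reflections included;
it characterises the uniform distribution among the finite measures on a sphere, up to scaling. -/
def IsOrthogonallyInvariant (μ : Measure E) : Prop :=
  ∀ L : E ≃ₗᵢ[ℝ] E, MeasurePreserving L μ μ

variable [BorelSpace E] {μ : Measure E} {R : ℝ}

lemma hasSum_integral_comp_inner_of_hasSum_pow [IsFiniteMeasure μ]
    (hμ : ∀ᵐ x ∂μ, x ∈ sphere (0 : E) R) {c : ℕ → ℝ} {e : ℕ → ℕ} {f : ℝ → ℝ}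
    (hf : ∀ t, HasSum (fun k => c k * t ^ e k) (f t)) (y : E) :
    HasSum (fun k => ∫ x, c k * ⟪y, x⟫ ^ e k ∂μ) (∫ x, f ⟪y, x⟫ ∂μ) := by
  refine hasSum_integral_of_dominated_convergence
    (fun k _ => |c k * (‖y‖ * R) ^ e k|) (fun k => ?_) (fun k => ?_)
    (.of_forall fun _ => (hf _).summable.abs) (integrable_const _) (.of_forall fun x => hf _)
  · exact Continuous.aestronglyMeasurable (by fun_prop)
  · filter_upwards [hμ] with x hx
    have hinner : |⟪y, x⟫| ≤ |‖y‖ * R| := by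
      rw [← mem_sphere_zero_iff_norm.1 hx]
      exact (abs_real_inner_le_norm y x).trans (le_abs_self _)
    rw [Real.norm_eq_abs, abs_mul, abs_mul, abs_pow, abs_pow]
    gcongr

namespace IsOrthogonallyInvariant

lemma integral_comp {F : Type*} [NormedAddCommGroup F] [NormedSpace ℝ F]
    (hinv : IsOrthogonallyInvariant μ) (L : E ≃ₗᵢ[ℝ] E) (f : E → F) :
    ∫ x, f (L x) ∂μ = ∫ x, f x ∂μ :=
  (hinv L).integral_comp L.toHomeomorph.measurableEmbedding f

lemma integral_mul_inner_eq_zero_of_inner_eq_zero (hinv : IsOrthogonallyInvariant μ) (f : ℝ → ℝ)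
    {y w : E} (hyw : ⟪y, w⟫ = 0) : ∫ x, f ⟪y, x⟫ * ⟪w, x⟫ ∂μ = 0 := by
  set L : E ≃ₗᵢ[ℝ] E := Submodule.reflection (ℝ ∙ w)ᗮ
  have hLy : L y = y := Submodule.reflection_mem_subspace_eq_self <|
    Submodule.mem_orthogonal_singleton_iff_inner_left.2 hyw
  have hLw : L (-w) = w := by
    rw [map_neg, Submodule.reflection_orthogonalComplement_singleton_eq_neg, neg_neg]
  have hy (x : E) : ⟪y, L x⟫ = ⟪y, x⟫ := by conv_lhs => rw [← hLy, L.inner_map_map]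
  have hw (x : E) : ⟪w, L x⟫ = -⟪w, x⟫ := by
    conv_lhs => rw [← hLw, L.inner_map_map, inner_neg_left]
  have h := hinv.integral_comp L fun x => f ⟪y, x⟫ * ⟪w, x⟫
  simp only [hy, hw, mul_neg, integral_neg] at h
  linarith

lemma integral_comp_add_mul_inner_eq_zero (hinv : IsOrthogonallyInvariant μ) (g : ℝ → ℝ)
    {y v : E} (hyv : ⟪y, v⟫ = 0) (t : ℝ) :
    ∫ x, g (⟪y, x⟫ + t * ⟪v, x⟫) * (‖y‖ ^ 2 * ⟪v, x⟫ - t * (‖v‖ ^ 2 * ⟪y, x⟫)) ∂μ = 0 := by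
  have horth : ⟪y + t • v, ‖y‖ ^ 2 • v - (t * ‖v‖ ^ 2) • y⟫ = 0 := by
    simp only [inner_add_left, inner_sub_right, real_inner_smul_right, hyv, real_inner_comm,
      real_inner_self_eq_norm_sq]
    ring
  simpa only [inner_add_left, inner_sub_left, real_inner_smul_left, mul_assoc] using
    hinv.integral_mul_inner_eq_zero_of_inner_eq_zero g horth

variable [FiniteDimensional ℝ E] [IsFiniteMeasure μ]

lemma integral_comp_inner_eq_integral_even_part (hinv : IsOrthogonallyInvariant μ)
    (hμ : ∀ᵐ x ∂μ, x ∈ sphere (0 : E) R) {f : ℝ → ℝ} (hf : Continuous f) (y : E) :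
    ∫ x, f ⟪y, x⟫ ∂μ = ∫ x, (f ⟪y, x⟫ + f (-⟪y, x⟫)) / 2 ∂μ := by
  have hint {f : E → ℝ} (hf : Continuous f) : Integrable f μ :=
    integrable_of_ae_mem_isCompact hf (isCompact_sphere 0 R) hμ
  have h := hinv.integral_comp (LinearIsometryEquiv.neg ℝ) fun x => f ⟪y, x⟫
  simp only [LinearIsometryEquiv.coe_neg, inner_neg_right] at h
  rw [integral_div, integral_add (hint (by fun_prop)) (hint (by fun_prop)), h, add_self_div_two]

lemma integral_comp_inner_smul (hinv : IsOrthogonallyInvariant μ)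
    (hμ : ∀ᵐ x ∂μ, x ∈ sphere (0 : E) R) {f : ℝ → ℝ} (hf : Continuous f) (y : E) :
    ∫ x, f ⟪y, x⟫ • x ∂μ = ((∫ x, f ⟪y, x⟫ * ⟪y, x⟫ ∂μ) / ‖y‖ ^ 2) • y := by
  have hint : Integrable (fun x => f ⟪y, x⟫ • x) μ :=
    integrable_of_ae_mem_isCompact (by fun_prop) (isCompact_sphere 0 R) hμ
  have inner_integral (w : E) :
      ⟪w, ∫ x, f ⟪y, x⟫ • x ∂μ⟫ = ∫ x, f ⟪y, x⟫ * ⟪w, x⟫ ∂μ := by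
    simp only [← integral_inner hint, inner_smul_right]
  have hmem : ∫ x, f ⟪y, x⟫ • x ∂μ ∈ ℝ ∙ y := by
    rw [← Submodule.orthogonal_orthogonal (ℝ ∙ y), Submodule.mem_orthogonal]
    intro w hw
    rw [inner_integral]
    exact hinv.integral_mul_inner_eq_zero_of_inner_eq_zero f
      (Submodule.mem_orthogonal_singleton_iff_inner_right.1 hw)
  rw [← Submodule.starProjection_eq_self_iff.2 hmem, Submodule.starProjection_singleton,
    inner_integral, RCLike.ofReal_real_eq_id, id]

lemma integral_deriv_mul_inner_sq (hinv : IsOrthogonallyInvariant μ)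
    (hμ : ∀ᵐ x ∂μ, x ∈ sphere (0 : E) R) {g g' : ℝ → ℝ} (hg : ∀ t, HasDerivAt g (g' t) t)
    (hg' : Continuous g') {y v : E} (hyv : ⟪y, v⟫ = 0) :
    ‖y‖ ^ 2 * ∫ x, g' ⟪y, x⟫ * ⟪v, x⟫ ^ 2 ∂μ = ‖v‖ ^ 2 * ∫ x, g ⟪y, x⟫ * ⟪y, x⟫ ∂μ := by
  have hg_cont : Continuous g := continuous_iff_continuousAt.2 fun t => (hg t).continuousAt
  have hint {f : E → ℝ} (hf : Continuous f) : Integrable f μ :=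
    integrable_of_ae_mem_isCompact hf (isCompact_sphere 0 R) hμ
  have hderiv := hasDerivAt_integral_of_ae_mem_isCompact (isCompact_sphere (0 : E) R) hμ
    (F := fun t x => g (⟪y, x⟫ + t * ⟪v, x⟫) * (‖y‖ ^ 2 * ⟪v, x⟫ - t * (‖v‖ ^ 2 * ⟪y, x⟫)))
    (fun t => by fun_prop) (by fun_prop)
    (fun t x => hasDerivAt_comp_add_mul_mul_sub hg ⟪y, x⟫ ⟪v, x⟫ _ _ t) 0
  simp only [hinv.integral_comp_add_mul_inner_eq_zero g hyv] at hderiv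
  have hzero := hderiv.unique (hasDerivAt_const 0 0)
  simp only [zero_mul, add_zero, sub_zero] at hzero
  rw [integral_sub (hint (by fun_prop)) (hint (by fun_prop)), sub_eq_zero] at hzero
  calc ‖y‖ ^ 2 * ∫ x, g' ⟪y, x⟫ * ⟪v, x⟫ ^ 2 ∂μ
      = ∫ x, g' ⟪y, x⟫ * ⟪v, x⟫ * (‖y‖ ^ 2 * ⟪v, x⟫) ∂μ := by
        rw [← integral_const_mul]
        congr! 2
        ring
    _ = ∫ x, g ⟪y, x⟫ * (‖v‖ ^ 2 * ⟪y, x⟫) ∂μ := hzero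
    _ = ‖v‖ ^ 2 * ∫ x, g ⟪y, x⟫ * ⟪y, x⟫ ∂μ := by
        rw [← integral_const_mul]
        congr! 2
        ring

lemma integral_deriv_mul_norm_sq_sub_inner_sq (hinv : IsOrthogonallyInvariant μ)
    (hμ : ∀ᵐ x ∂μ, x ∈ sphere (0 : E) R) {g g' : ℝ → ℝ} (hg : ∀ t, HasDerivAt g (g' t) t)
    (hg' : Continuous g') {y : E} (hy : y ≠ 0) :
    ∫ x, g' ⟪y, x⟫ * ((‖y‖ * R) ^ 2 - ⟪y, x⟫ ^ 2) ∂μ =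
      ((finrank ℝ E : ℝ) - 1) * ∫ x, g ⟪y, x⟫ * ⟪y, x⟫ ∂μ := by
  set b := stdOrthonormalBasis ℝ (ℝ ∙ y)ᗮ
  calc ∫ x, g' ⟪y, x⟫ * ((‖y‖ * R) ^ 2 - ⟪y, x⟫ ^ 2) ∂μ
      = ∫ x, ∑ j, ‖y‖ ^ 2 * (g' ⟪y, x⟫ * ⟪(b j : E), x⟫ ^ 2) ∂μ := by
        refine integral_congr_ae ?_
        filter_upwards [hμ] with x hx
        rw [mul_pow, ← mem_sphere_zero_iff_norm.1 hx, ← norm_sq_mul_sum_inner_sq y x b]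
        simp only [Finset.mul_sum]
        congr! 1
        ring
    _ = ∑ j, ‖y‖ ^ 2 * ∫ x, g' ⟪y, x⟫ * ⟪(b j : E), x⟫ ^ 2 ∂μ := by
        rw [integral_finsetSum _ fun _ _ =>
          integrable_of_ae_mem_isCompact (by fun_prop) (isCompact_sphere 0 R) hμ]
        simp only [integral_const_mul]
    _ = ∑ _, ∫ x, g ⟪y, x⟫ * ⟪y, x⟫ ∂μ := by
        congr! 1 with j
        rw [hinv.integral_deriv_mul_inner_sq hμ hg hg'
          (Submodule.mem_orthogonal_singleton_iff_inner_right.1 (b j).2),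
          ← Submodule.coe_norm, b.norm_eq_one, one_pow, one_mul]
    _ = ((finrank ℝ E : ℝ) - 1) * ∫ x, g ⟪y, x⟫ * ⟪y, x⟫ ∂μ := by
        rw [Finset.sum_const, Finset.card_univ, Fintype.card_fin, nsmul_eq_mul,
          cast_finrank_orthogonal_span_singleton hy]

lemma integral_inner_pow_two_mul_succ (hinv : IsOrthogonallyInvariant μ)
    (hμ : ∀ᵐ x ∂μ, x ∈ sphere (0 : E) R) {y : E} (hy : y ≠ 0) (k : ℕ) :
    ((finrank ℝ E : ℝ) + 2 * k) * ∫ x, ⟪y, x⟫ ^ (2 * (k + 1)) ∂μ =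
      (2 * k + 1) * (‖y‖ * R) ^ 2 * ∫ x, ⟪y, x⟫ ^ (2 * k) ∂μ := by
  have hint (p : ℕ) : Integrable (fun x => ⟪y, x⟫ ^ p) μ :=
    integrable_of_ae_mem_isCompact (by fun_prop) (isCompact_sphere 0 R) hμ
  have hstein := hinv.integral_deriv_mul_norm_sq_sub_inner_sq hμ
    (g := fun t => t ^ (2 * k + 1)) (fun t => hasDerivAt_pow _ t) (by fun_prop) hy
  have hleft (x : E) : ((2 * k + 1 : ℕ) : ℝ) * ⟪y, x⟫ ^ (2 * k + 1 - 1) *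
      ((‖y‖ * R) ^ 2 - ⟪y, x⟫ ^ 2) =
      (2 * k + 1) * (‖y‖ * R) ^ 2 * ⟪y, x⟫ ^ (2 * k) - (2 * k + 1) * ⟪y, x⟫ ^ (2 * (k + 1)) := by
    push_cast [Nat.add_sub_cancel]
    ring
  have hright (x : E) : ⟪y, x⟫ ^ (2 * k + 1) * ⟪y, x⟫ = ⟪y, x⟫ ^ (2 * (k + 1)) :=
    (pow_succ _ _).symm
  simp only [hleft, hright] at hstein
  rw [integral_sub ((hint _).const_mul _) ((hint _).const_mul _), integral_const_mul,
    integral_const_mul] at hstein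
  linear_combination -hstein

lemma integral_inner_pow_two_mul (hinv : IsOrthogonallyInvariant μ)
    (hμ : ∀ᵐ x ∂μ, x ∈ sphere (0 : E) R) {y : E} (hy : y ≠ 0) (k : ℕ) :
    ∫ x, ⟪y, x⟫ ^ (2 * k) ∂μ = μ.real Set.univ * Real.Gamma (finrank ℝ E / 2) *
      ((2 * k).factorial / (k.factorial * Real.Gamma (k + finrank ℝ E / 2)) *
        (‖y‖ * R / 2) ^ (2 * k)) := by
  have : Nontrivial E := ⟨y, 0, hy⟩
  have hn : (0 : ℝ) < finrank ℝ E := mod_cast finrank_pos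
  have hΓ (k : ℕ) : Real.Gamma (k + finrank ℝ E / 2) ≠ 0 :=
    (Real.Gamma_pos_of_pos (by positivity)).ne'
  induction k with
  | zero =>
    have := hΓ 0
    rw [Nat.cast_zero, zero_add] at this
    simp [this]
  | succ k ih =>
    have hΓ_succ : Real.Gamma ((k + 1 : ℕ) + finrank ℝ E / 2) =
        (k + finrank ℝ E / 2) * Real.Gamma (k + finrank ℝ E / 2) := by
      rw [← Real.Gamma_add_one (by positivity)]
      push_cast
      ring_nf
    have hrec := hinv.integral_inner_pow_two_mul_succ hμ hy k
    have hpos : 0 < (finrank ℝ E : ℝ) + 2 * k := by positivity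
    have := hΓ k
    rw [← mul_right_inj' hpos.ne', hrec, ih, hΓ_succ, mul_add_one 2 k,
      Nat.factorial_succ (2 * k + 1), Nat.factorial_succ (2 * k), Nat.factorial_succ k]
    push_cast
    field_simp
    ring

lemma integral_exp_inner (hinv : IsOrthogonallyInvariant μ) (hμ : ∀ᵐ x ∂μ, x ∈ sphere (0 : E) R)
    (hR : 0 < R) {y : E} (hy : y ≠ 0) :
    (‖y‖ * R / 2) ^ ((finrank ℝ E : ℝ) / 2 - 1) * ∫ x, Real.exp ⟪y, x⟫ ∂μ =
      μ.real Set.univ * Real.Gamma (finrank ℝ E / 2) *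
        besselI (finrank ℝ E / 2 - 1) (‖y‖ * R) := by
  have hcosh : ∫ x, Real.exp ⟪y, x⟫ ∂μ = ∫ x, Real.cosh ⟪y, x⟫ ∂μ := by
    simp only [hinv.integral_comp_inner_eq_integral_even_part hμ Real.continuous_exp,
      Real.cosh_eq]
  have hsum : HasSum (fun k : ℕ => ∫ x, ⟪y, x⟫ ^ (2 * k) / (2 * k).factorial ∂μ)
      (∫ x, Real.cosh ⟪y, x⟫ ∂μ) := by
    simpa only [one_div_mul_eq_div] using hasSum_integral_comp_inner_of_hasSum_pow hμ
      (c := fun k => 1 / (2 * k).factorial) (e := fun k => 2 * k)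
      (fun t => by simpa only [one_div_mul_eq_div] using Real.hasSum_cosh t) y
  have hterm (k : ℕ) : ∫ x, ⟪y, x⟫ ^ (2 * k) / (2 * k).factorial ∂μ =
      μ.real Set.univ * Real.Gamma (finrank ℝ E / 2) * ((‖y‖ * R / 2) ^ (2 * k) /
        (k.factorial * Real.Gamma (k + ((finrank ℝ E : ℝ) / 2 - 1) + 1))) := by
    rw [integral_div, hinv.integral_inner_pow_two_mul hμ hy, add_sub_assoc', sub_add_cancel]
    field_simp
  rw [hcosh, ← hsum.tsum_eq, tsum_congr hterm, tsum_mul_left,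
    besselI_eq_rpow_mul_tsum _ (mul_pos (norm_pos_iff.2 hy) hR)]
  ring

lemma integral_exp_inner_mul_inner (hinv : IsOrthogonallyInvariant μ)
    (hμ : ∀ᵐ x ∂μ, x ∈ sphere (0 : E) R) (hR : 0 < R) {y : E} (hy : y ≠ 0) :
    (‖y‖ * R / 2) ^ ((finrank ℝ E : ℝ) / 2 - 1) * ∫ x, Real.exp ⟪y, x⟫ * ⟪y, x⟫ ∂μ =
      μ.real Set.univ * Real.Gamma (finrank ℝ E / 2) *
        (‖y‖ * R * besselI (finrank ℝ E / 2) (‖y‖ * R)) := by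
  have hz : 0 < ‖y‖ * R := mul_pos (norm_pos_iff.2 hy) hR
  have hsinh : ∫ x, Real.exp ⟪y, x⟫ * ⟪y, x⟫ ∂μ = ∫ x, Real.sinh ⟪y, x⟫ * ⟪y, x⟫ ∂μ := by
    rw [hinv.integral_comp_inner_eq_integral_even_part hμ (f := fun t => Real.exp t * t)
      (by fun_prop)]
    congr! 2 with x
    rw [Real.sinh_eq]
    ring
  have hsum : HasSum (fun k : ℕ => ∫ x, ⟪y, x⟫ ^ (2 * (k + 1)) / (2 * k + 1).factorial ∂μ)
      (∫ x, Real.sinh ⟪y, x⟫ * ⟪y, x⟫ ∂μ) := by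
    simpa only [one_div_mul_eq_div] using hasSum_integral_comp_inner_of_hasSum_pow hμ
      (c := fun k => 1 / (2 * k + 1).factorial) (e := fun k => 2 * (k + 1))
      (f := fun t => Real.sinh t * t)
      (fun t => by
        simpa only [one_div_mul_eq_div, mul_add_one, pow_succ, div_mul_eq_mul_div, mul_assoc,
          one_mul] using (Real.hasSum_sinh t).mul_right t) y
  have hterm (k : ℕ) : ∫ x, ⟪y, x⟫ ^ (2 * (k + 1)) / (2 * k + 1).factorial ∂μ =
      μ.real Set.univ * Real.Gamma (finrank ℝ E / 2) * (‖y‖ * R) * (‖y‖ * R / 2) *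
        ((‖y‖ * R / 2) ^ (2 * k) / (k.factorial * Real.Gamma (k + finrank ℝ E / 2 + 1))) := by
    rw [integral_div, hinv.integral_inner_pow_two_mul hμ hy, mul_add_one 2 k,
      Nat.factorial_succ (2 * k + 1), Nat.factorial_succ k, Nat.cast_add_one k,
      add_right_comm (k : ℝ) 1]
    push_cast
    field_simp
    ring
  have hrpow : (‖y‖ * R / 2) ^ ((finrank ℝ E : ℝ) / 2) =
      (‖y‖ * R / 2) ^ ((finrank ℝ E : ℝ) / 2 - 1) * (‖y‖ * R / 2) := by
    rw [← Real.rpow_add_one (by positivity), sub_add_cancel]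
  rw [hsinh, ← hsum.tsum_eq, tsum_congr hterm, tsum_mul_left, besselI_eq_rpow_mul_tsum _ hz,
    hrpow]
  ring

lemma integral_exp_inner_mul_inner_eq_besselRatio (hinv : IsOrthogonallyInvariant μ)
    (hμ : ∀ᵐ x ∂μ, x ∈ sphere (0 : E) R) (hR : 0 < R) {y : E} (hy : y ≠ 0) :
    ∫ x, Real.exp ⟪y, x⟫ * ⟪y, x⟫ ∂μ =
      (∫ x, Real.exp ⟪y, x⟫ ∂μ) * (‖y‖ * R * besselRatio (finrank ℝ E / 2) (‖y‖ * R)) := by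
  rcases eq_or_ne μ 0 with rfl | hμ0
  · simp only [integral_zero_measure, zero_mul]
  have : NeZero μ := ⟨hμ0⟩
  have hexp_pos : 0 < ∫ x, Real.exp ⟪y, x⟫ ∂μ := integral_exp_pos <|
    integrable_of_ae_mem_isCompact (by fun_prop) (isCompact_sphere 0 R) hμ
  have hprefactor : 0 < (‖y‖ * R / 2) ^ ((finrank ℝ E : ℝ) / 2 - 1) := by positivity
  have hexp := hinv.integral_exp_inner hμ hR hy
  have hexp_mul := hinv.integral_exp_inner_mul_inner hμ hR hy
  have hbessel : besselI ((finrank ℝ E : ℝ) / 2 - 1) (‖y‖ * R) ≠ 0 :=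
    right_ne_zero_of_mul (hexp ▸ (mul_pos hprefactor hexp_pos).ne')
  have hratio : besselI (finrank ℝ E / 2) (‖y‖ * R) =
      besselRatio (finrank ℝ E / 2) (‖y‖ * R) * besselI ((finrank ℝ E : ℝ) / 2 - 1) (‖y‖ * R) :=
    (div_mul_cancel₀ _ hbessel).symm
  rw [← mul_right_inj' hprefactor.ne', hexp_mul, ← mul_assoc (_ ^ _), hexp, hratio]
  ring

lemma integral_exp_inner_smul (hinv : IsOrthogonallyInvariant μ)
    (hμ : ∀ᵐ x ∂μ, x ∈ sphere (0 : E) R) (hR : 0 < R) {y : E} (hy : y ≠ 0) :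
    ∫ x, Real.exp ⟪y, x⟫ • x ∂μ =
      ((∫ x, Real.exp ⟪y, x⟫ ∂μ) *
        (R / ‖y‖ * besselRatio (finrank ℝ E / 2) (‖y‖ * R))) • y := by
  rw [hinv.integral_comp_inner_smul hμ Real.continuous_exp,
    hinv.integral_exp_inner_mul_inner_eq_besselRatio hμ hR hy]
  congr 1
  field_simp

end IsOrthogonallyInvariant

theorem conditional_mean_on_sphere_general [FiniteDimensional ℝ E] [IsFiniteMeasure μ]
    (hinv : IsOrthogonallyInvariant μ) (hμ : ∀ᵐ x ∂μ, x ∈ sphere (0 : E) R) (hR : 0 < R) {s : ℝ}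
    (hs : 0 < s) {y : E} (hy : y ≠ 0) :
    (∫ x, Real.exp (-‖y - x‖ ^ 2 / (2 * s)) • x ∂μ) =
      ((∫ x, Real.exp (-‖y - x‖ ^ 2 / (2 * s)) ∂μ) *
        (R / ‖y‖ * besselRatio (finrank ℝ E / 2) (‖y‖ * R / s))) • y := by
  set c := Real.exp (-(‖y‖ ^ 2 + R ^ 2) / (2 * s))
  have hweight : ∀ᵐ x ∂μ, Real.exp (-‖y - x‖ ^ 2 / (2 * s)) = c * Real.exp ⟪s⁻¹ • y, x⟫ :=
    hμ.mono fun x hx => exp_neg_norm_sub_sq_div hx s y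
  have hnorm : ‖s⁻¹ • y‖ = ‖y‖ / s := by
    rw [norm_smul, norm_inv, Real.norm_of_nonneg hs.le, inv_mul_eq_div]
  calc ∫ x, Real.exp (-‖y - x‖ ^ 2 / (2 * s)) • x ∂μ
      = c • ∫ x, Real.exp ⟪s⁻¹ • y, x⟫ • x ∂μ := by
        rw [← integral_smul]
        exact integral_congr_ae (hweight.mono fun x hx => by simp only [hx, mul_smul])
    _ = ((c * ∫ x, Real.exp ⟪s⁻¹ • y, x⟫ ∂μ) *
          (R / ‖y‖ * besselRatio (finrank ℝ E / 2) (‖y‖ * R / s))) • y := by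
        rw [hinv.integral_exp_inner_smul hμ hR (smul_ne_zero (inv_ne_zero hs.ne') hy), hnorm,
          smul_smul, smul_smul, div_mul_eq_mul_div ‖y‖]
        congr 1
        field_simp
    _ = _ := by rw [← integral_const_mul, integral_congr_ae hweight]

end Sphere

section Hausdorff

open Metric Module
open scoped RealInnerProductSpace Measure

variable {E : Type*} [NormedAddCommGroup E]

lemma hausdorffMeasure_image_lt_top_of_isCompact [NormedSpace ℝ E] [MeasurableSpace E]
    [BorelSpace E] {F : Type*} [NormedAddCommGroup F] [NormedSpace ℝ F] [FiniteDimensional ℝ F]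
    {f : F → E} (hf : ContDiff ℝ 1 f) {K : Set F} (hK : IsCompact K) :
    μH[finrank ℝ F] (f '' K) < ⊤ := by
  borelize F
  obtain ⟨C, hC⟩ := hf.locallyLipschitz.locallyLipschitzOn.exists_lipschitzOnWith_of_compact hK
  calc μH[finrank ℝ F] (f '' K)
      ≤ (C : ENNReal) ^ (finrank ℝ F : ℝ) * μH[finrank ℝ F] K :=
        hC.hausdorffMeasure_image_le (Nat.cast_nonneg _)
    _ < ⊤ := ENNReal.mul_lt_top
        (ENNReal.rpow_lt_top_of_nonneg (Nat.cast_nonneg _) ENNReal.coe_ne_top) hK.measure_lt_top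

variable [InnerProductSpace ℝ E] {R : ℝ}

/-- The central projection onto the sphere of radius `R` of the affine hyperplane through `x`
orthogonal to `x`, used as a chart of the sphere around `x`. -/
noncomputable def centralProjection (R : ℝ) (x : E) (w : (ℝ ∙ x)ᗮ) : E :=
  (R / ‖x + w‖) • (x + w)

lemma contDiff_centralProjection {n : WithTop ℕ∞} (R : ℝ) {x : E} (hx : x ≠ 0) :
    ContDiff ℝ n (centralProjection R x) := by
  have hne (w : (ℝ ∙ x)ᗮ) : x + w ≠ 0 := fun h => hx <| by
    have hxw : ⟪x, (w : E)⟫ = 0 := Submodule.mem_orthogonal_singleton_iff_inner_right.1 w.2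
    have := congrArg (⟪x, ·⟫) h
    simpa only [inner_add_right, hxw, add_zero, inner_zero_right, inner_self_eq_zero] using this
  have hadd : ContDiff ℝ n fun w : (ℝ ∙ x)ᗮ => x + w :=
    contDiff_const.add (ℝ ∙ x)ᗮ.subtypeL.contDiff
  exact (contDiff_const.div (hadd.norm ℝ hne) fun w => norm_ne_zero_iff.2 (hne w)).smul hadd

lemma setOf_lt_inner_subset_image_centralProjection (hR : 0 < R) {x : E}
    (hx : x ∈ sphere (0 : E) R) :
    {y ∈ sphere (0 : E) R | R ^ 2 / 2 < ⟪x, y⟫} ⊆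
      centralProjection R x '' closedBall 0 (3 * R) := by
  rintro y ⟨hy, hxy⟩
  rw [mem_sphere_zero_iff_norm] at hx hy
  have hpos : 0 < ⟪x, y⟫ := (by positivity : 0 < R ^ 2 / 2).trans hxy
  set c := R ^ 2 / ⟪x, y⟫ with hc
  have hc_pos : 0 < c := by positivity
  have hc_lt : c < 2 := (div_lt_iff₀ hpos).2 (by linarith)
  have horth : c • y - x ∈ (ℝ ∙ x)ᗮ := Submodule.mem_orthogonal_singleton_iff_inner_right.2 <| by
    rw [inner_sub_right, real_inner_smul_right, real_inner_self_eq_norm_sq, hx, hc,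
      div_mul_cancel₀ _ hpos.ne', sub_self]
  refine ⟨⟨c • y - x, horth⟩, mem_closedBall_zero_iff.2 ?_, ?_⟩
  · calc ‖c • y - x‖ ≤ ‖c • y‖ + ‖x‖ := norm_sub_le _ _
      _ = c * R + R := by rw [norm_smul, Real.norm_of_nonneg hc_pos.le, hx, hy]
      _ ≤ 3 * R := by nlinarith
  · have hscale : R / (c * R) * c = 1 := by field_simp
    rw [centralProjection, add_sub_cancel, norm_smul, Real.norm_of_nonneg hc_pos.le, hy,
      smul_smul, hscale, one_smul]

variable [MeasurableSpace E] [BorelSpace E]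

lemma isOrthogonallyInvariant_hausdorffMeasure_restrict_sphere (d R : ℝ) :
    IsOrthogonallyInvariant (μH[d].restrict (sphere (0 : E) R)) := fun L => by
  have hpreimage : L.toIsometryEquiv ⁻¹' sphere (0 : E) R = sphere 0 R := by
    rw [IsometryEquiv.preimage_sphere]
    exact congrArg (sphere · R) (map_zero L.symm)
  have h := (L.toIsometryEquiv.measurePreserving_hausdorffMeasure d).restrict_preimage
    (isClosed_sphere (x := (0 : E)) (ε := R)).measurableSet
  rwa [hpreimage] at h

lemma hausdorffMeasure_sphere_lt_top [FiniteDimensional ℝ E] (hR : 0 < R) :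
    μH[(finrank ℝ E : ℝ) - 1] (sphere (0 : E) R) < ⊤ := by
  refine (isCompact_sphere 0 R).measure_lt_top_of_nhdsWithin fun x hx =>
    ⟨{y ∈ sphere (0 : E) R | R ^ 2 / 2 < ⟪x, y⟫}, ?_, ?_⟩
  · have hself : R ^ 2 / 2 < ⟪x, x⟫ := by
      rw [real_inner_self_eq_norm_sq, mem_sphere_zero_iff_norm.1 hx]
      exact half_lt_self (by positivity)
    have hopen : IsOpen {y : E | R ^ 2 / 2 < ⟪x, y⟫} :=
      isOpen_lt continuous_const (continuous_const.inner continuous_id)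
    exact inter_mem_nhdsWithin _ (hopen.mem_nhds hself)
  · have hx0 : x ≠ 0 := ne_of_mem_sphere hx hR.ne'
    rw [← cast_finrank_orthogonal_span_singleton hx0]
    exact (measure_mono (setOf_lt_inner_subset_image_centralProjection hR hx)).trans_lt
      (hausdorffMeasure_image_lt_top_of_isCompact (contDiff_centralProjection R hx0)
        (isCompact_closedBall _ _))

lemma isOrthogonallyInvariant_sphereMeasure (n : ℕ) (R : ℝ) :
    IsOrthogonallyInvariant (sphereMeasure n R) :=
  isOrthogonallyInvariant_hausdorffMeasure_restrict_sphere _ R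

lemma ae_mem_sphere_sphereMeasure (n : ℕ) (R : ℝ) :
    ∀ᵐ x ∂sphereMeasure n R, x ∈ sphere 0 R :=
  ae_restrict_mem isClosed_sphere.measurableSet

lemma isFiniteMeasure_sphereMeasure (n : ℕ) {R : ℝ} (hR : 0 < R) :
    IsFiniteMeasure (sphereMeasure n R) := by
  have h := hausdorffMeasure_sphere_lt_top (E := EuclideanSpace ℝ (Fin n)) hR
  rw [finrank_euclideanSpace_fin] at h
  exact isFiniteMeasure_restrict.2 h.ne

end Hausdorff

/-- Bayes-rule form of `E[X_R | Y = y]` for `X_R` uniform on the sphere of radius `R`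
and `Y = X_R + √s Z` with Gaussian noise of variance `s`. -/
theorem conditional_mean_on_sphere (n : ℕ) (hn : 0 < n) (R s : ℝ) (hR : 0 < R) (hs : 0 < s)
    (y : EuclideanSpace ℝ (Fin n)) (hy : y ≠ 0) :
    (∫ x, Real.exp (-‖y - x‖ ^ 2 / (2 * s)) • x ∂(sphereMeasure n R)) =
      ((∫ x, Real.exp (-‖y - x‖ ^ 2 / (2 * s)) ∂(sphereMeasure n R)) *
        ((R / ‖y‖) * besselRatio ((n : ℝ) / 2) (‖y‖ * R / s))) • y := by
  have := isFiniteMeasure_sphereMeasure n hR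
  simpa only [finrank_euclideanSpace_fin] using conditional_mean_on_sphere_general
    (isOrthogonallyInvariant_sphereMeasure n R) (ae_mem_sphere_sphereMeasure n R) hR hs hy
end
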